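/- Let k₋, k₊ be positive integers, let A₋ and A₊ be linear endomorphisms of ℝ^{k₋} and ℝ^{k₊} respectively all of whose complex eigenvalues have real part ≥ δ for some δ > 0, and let B₋, B₊ be continuously differentiable maps from a neighborhood U of 0 in ℝ^{k₋} × ℝ^{k₊} into the spaces of linear maps ℝ^{k₋+k₊} → ℝ^{k₋} and ℝ^{k₋+k₊} → ℝ^{k₊} respectively, with B₋(0) = 0 and B₊(0) = 0. Set ε = δ/2. Then there exist constants C > 0 and K₀ > 0, depending only on A_± and B_±, such that for every T > 0 and every differentiable solution x = (x₋, x₊) : [0, T] → U of the system x₋' = −A₋x₋ + B₋(x)x, x₊' = A₊x₊ + B₊(x)x with M := sup_{0 ≤ t ≤ T} ‖x(t)‖ ≤ K₀, one has ‖x(t)‖ ≤ C(e^{−εt} + e^{−ε(T−t)}) M for all t ∈ [0, T], and ∫₀^T ‖x(t)‖ dt ≤ C M. -/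

import Mathlib

/-- An endomorphism of a finite-dimensional complex vector space whose eigenvalues all have real
part larger than `a` is `a`-accretive for a suitable Hermitian inner product, given here by its
real part. -/
theorem exists_accretive_form_of_eigenvalue_re_lt (n : ℕ) :
    ∀ (V : Type) [AddCommGroup V] [Module ℂ V] [FiniteDimensional ℂ V],
      Module.finrank ℂ V = n → ∀ (f : V →ₗ[ℂ] V) (a b : ℝ), a < b →
      (∀ μ, Module.End.HasEigenvalue f μ → b ≤ μ.re) →
      ∃ β : V →ₗ[ℝ] V →ₗ[ℝ] ℝ, (∀ x y, β x y = β y x) ∧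
        (∀ (c : ℂ) x, β (c • x) (c • x) = Complex.normSq c * β x x) ∧
        (∀ x, x ≠ 0 → 0 < β x x) ∧ ∀ x, a * β x x ≤ β (f x) x := by
  induction n using Nat.strong_induction_on with
  | _ n ih =>
  intro V _ _ _ hn f a b hab hf
  rcases subsingleton_or_nontrivial V with hV | hV
  · exact ⟨0, by simp, by simp, fun x hx => (hx (Subsingleton.elim _ _)).elim, by simp⟩
  obtain ⟨μ, hμ⟩ := Module.End.exists_eigenvalue f
  have hrange : LinearMap.range (f - μ • LinearMap.id) < ⊤ := by
    rw [lt_top_iff_ne_top]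
    intro h
    have hinj := LinearMap.ker_eq_bot_iff_range_eq_top.mpr h
    obtain ⟨v, hv⟩ := hμ.exists_hasEigenvector
    refine hv.2 ?_
    rw [← Submodule.mem_bot ℂ, ← hinj]
    simp [hv.apply_eq_smul]
  obtain ⟨φ, hφ0, hφ⟩ := Submodule.exists_le_ker_of_lt_top _ hrange
  have hφf : ∀ x, φ (f x) = μ * φ x := by
    intro x
    have : (f - μ • LinearMap.id : V →ₗ[ℂ] V) x ∈ LinearMap.ker φ := hφ ⟨x, rfl⟩
    simpa [sub_eq_zero] using this
  obtain ⟨v, hv⟩ : ∃ v, φ v = 1 := by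
    obtain ⟨u, hu⟩ : ∃ u, φ u ≠ 0 := by
      by_contra! h
      exact hφ0 (LinearMap.ext h)
    exact ⟨(φ u)⁻¹ • u, by simp [hu]⟩
  let W := LinearMap.ker φ
  have hW : ∀ x ∈ W, f x ∈ W := by
    intro x hx
    have hx' : φ x = 0 := hx
    change φ (f x) = 0
    simp [hφf, hx']
  let g : W →ₗ[ℂ] W := f.restrict hW
  let p : V →ₗ[ℂ] W := LinearMap.codRestrict W (LinearMap.id - φ.smulRight v) (by
    intro x
    change φ _ = 0
    simp [hv])
  have hp : ∀ x, (p x : V) = x - φ x • v := fun x => rfl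
  have hcard : Module.finrank ℂ W < n := by
    rw [← hn]
    apply Submodule.finrank_lt
    rw [ne_eq, LinearMap.ker_eq_top]
    exact hφ0
  have hg : ∀ ν, Module.End.HasEigenvalue g ν → b ≤ ν.re := by
    intro ν hν
    obtain ⟨w, hw⟩ := hν.exists_hasEigenvector
    refine hf ν (Module.End.hasEigenvalue_of_hasEigenvector (x := (w : V)) ?_)
    refine Module.End.hasEigenvector_iff.mpr ⟨Module.End.mem_eigenspace_iff.mpr ?_, ?_⟩
    · exact congrArg Subtype.val hw.apply_eq_smul
    · simpa using hw.2
  obtain ⟨γ, hγs, hγc, hγp, hγg⟩ :=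
    ih _ hcard W rfl g ((a + b) / 2) b (by linarith) hg
  have hγ0 : ∀ x, 0 ≤ γ x x := by
    intro x
    by_cases hx : x = 0
    · simp [hx]
    · exact (hγp x hx).le
  let w₀ : W := p (f v)
  have hpf : ∀ x, p (f x) = g (p x) + φ x • w₀ := by
    intro x
    apply Subtype.ext
    change (p (f x) : V) = f (p x) + φ x • (p (f v) : V)
    simp only [hp, hφf, hv, map_sub, map_smul]
    module
  let N : ℝ := γ w₀ w₀ / (b - a) ^ 2 + 1
  have hN : 0 < N := by
    have := hγ0 w₀
    positivity
  let β : V →ₗ[ℝ] V →ₗ[ℝ] ℝ := LinearMap.mk₂ ℝ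
    (fun x y => γ (p x) (p y) + N * ((φ x).re * (φ y).re + (φ x).im * (φ y).im))
    (by intros; simp; ring) (by intro c x y; simp; ring)
    (by intros; simp; ring) (by intros; simp; ring)
  have hβ : ∀ x y, β x y =
    γ (p x) (p y) + N * ((φ x).re * (φ y).re + (φ x).im * (φ y).im) := fun _ _ => rfl
  refine ⟨β, ?_, ?_, ?_, ?_⟩
  · intro x y
    rw [hβ, hβ, hγs]
    ring
  · intro c x
    simp only [hβ, map_smul, hγc, Complex.normSq_apply, smul_eq_mul, Complex.mul_re,
      Complex.mul_im]
    ring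
  · intro x hx
    rw [hβ]
    by_cases h : φ x = 0
    · have : p x ≠ 0 := by
        intro h'
        apply hx
        have := congrArg Subtype.val h'
        simpa [hp, h] using this
      simpa [h] using hγp _ this
    · have h1 := Complex.normSq_pos.mpr h
      rw [Complex.normSq_apply] at h1
      have := hγ0 (p x)
      positivity
  · intro x
    have h1 := hγg (p x)
    have h2 := hγ0 (φ x • w₀ + (b - a) • p x)
    have h3 : γ (p x) (φ x • w₀) = γ (φ x • w₀) (p x) := hγs _ _
    simp only [map_add, LinearMap.add_apply, map_smul, LinearMap.smul_apply, smul_eq_mul,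
      h3, hγc] at h2
    have hba : 0 < b - a := by linarith
    have h4 := hf μ hμ
    have hNdef : γ w₀ w₀ = (N - 1) * (b - a) ^ 2 := by
      simp only [N]
      field_simp
      ring
    rw [hNdef] at h2
    have h5 : 0 ≤ Complex.normSq (φ x) := Complex.normSq_nonneg _
    have h6 : 0 ≤ (N - 1) * (b - a) * Complex.normSq (φ x) + 2 * γ (φ x • w₀) (p x)
        + (b - a) * γ (p x) (p x) := by
      refine (mul_nonneg_iff_of_pos_left hba).mp ?_
      nlinarith
    rw [hβ, hβ, hpf, hφf, map_add, LinearMap.add_apply]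
    have h7 : (μ * φ x).re * (φ x).re + (μ * φ x).im * (φ x).im
        = μ.re * Complex.normSq (φ x) := by
      simp [Complex.normSq_apply]; ring
    have h8 : (φ x).re * (φ x).re + (φ x).im * (φ x).im = Complex.normSq (φ x) := by
      simp [Complex.normSq_apply]
    rw [h7, h8]
    have h9 : N * (b * Complex.normSq (φ x)) ≤ N * (μ.re * Complex.normSq (φ x)) := by gcongr
    nlinarith [mul_nonneg (mul_nonneg hN.le hba.le) h5, mul_nonneg hba.le h5]

/-- A real matrix whose complex eigenvalues all have real part at least `b > a` is `a`-accretive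
for a suitable inner product. -/
theorem Matrix.exists_accretive_form {n : ℕ} (A : Matrix (Fin n) (Fin n) ℝ) {a b : ℝ}
    (hab : a < b)
    (hA : ∀ μ ∈ ((A.map (Complex.ofReal : ℝ → ℂ)).charpoly).roots, b ≤ μ.re) :
    ∃ β : (Fin n → ℝ) →L[ℝ] (Fin n → ℝ) →L[ℝ] ℝ, (∀ x y, β x y = β y x) ∧
      (∃ c > 0, ∀ x, c * ‖x‖ ^ 2 ≤ β x x) ∧ ∀ x, a * β x x ≤ β (A.mulVec x) x := by
  obtain ⟨γ, hγs, -, hγp, hγA⟩ := exists_accretive_form_of_eigenvalue_re_lt _ (Fin n → ℂ) rfl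
    (Matrix.toLin' (A.map (Complex.ofReal : ℝ → ℂ))) a b hab (by
      intro μ hμ
      apply hA
      rw [Polynomial.mem_roots (Matrix.charpoly_monic _).ne_zero]
      rw [Module.End.hasEigenvalue_iff_isRoot_charpoly] at hμ
      simpa using hμ)
  let ι : (Fin n → ℝ) →ₗ[ℝ] (Fin n → ℂ) := Complex.ofRealCLM.toLinearMap.compLeft (Fin n)
  have hι : ∀ x i, ι x i = (x i : ℂ) := fun _ _ => rfl
  let β : (Fin n → ℝ) →L[ℝ] (Fin n → ℝ) →L[ℝ] ℝ := LinearMap.toContinuousLinearMap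
    ((LinearMap.toContinuousLinearMap (𝕜 := ℝ) (E := Fin n → ℝ) (F' := ℝ)).toLinearMap ∘ₗ
      γ.compl₁₂ ι ι)
  have hβ : ∀ x y, β x y = γ (ι x) (ι y) := fun _ _ => rfl
  refine ⟨β, fun x y => hγs _ _, ?_, ?_⟩
  · have hpos : ∀ x ∈ Metric.sphere (0 : Fin n → ℝ) 1, 0 < β x x := by
      intro x hx
      rw [hβ]
      apply hγp
      intro h
      have : x = 0 := by
        ext i
        simpa [hι] using congrFun h i
      simp [this] at hx
    obtain ⟨c, hc, hmin⟩ := (isCompact_sphere (0 : Fin n → ℝ) 1).exists_forall_le'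
      (f := fun x => β x x) (by fun_prop) hpos
    refine ⟨c, hc, fun x => ?_⟩
    by_cases hx : x = 0
    · simp [hx]
    have hx' : 0 < ‖x‖ := norm_pos_iff.mpr hx
    have := hmin (‖x‖⁻¹ • x) (by simp [norm_smul, hx'.ne'])
    simp only [map_smul, _root_.smul_apply, smul_eq_mul] at this
    calc c * ‖x‖ ^ 2 ≤ (‖x‖⁻¹ * (‖x‖⁻¹ * β x x)) * ‖x‖ ^ 2 := by gcongr
      _ = β x x := by field_simp
  · intro x
    have h := hγA (ι x)
    have h' : Matrix.toLin' (A.map (Complex.ofReal : ℝ → ℂ)) (ι x) = ι (A.mulVec x) := by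
      ext i
      simp [hι, Matrix.mulVec, dotProduct]
    rw [h'] at h
    exact h

/-- A differential form of Grönwall's inequality with exponential rate of arbitrary sign. -/
theorem le_exp_mul_of_hasDerivAt_le {f f' : ℝ → ℝ} {k a b : ℝ} (hab : a ≤ b)
    (hf : ∀ t ∈ Set.Icc a b, HasDerivAt f (f' t) t)
    (hf' : ∀ t ∈ Set.Icc a b, f' t ≤ k * f t) :
    f b ≤ Real.exp (k * (b - a)) * f a := by
  have hd : ∀ t ∈ Set.Icc a b, HasDerivAt (fun s => Real.exp (-k * s) * f s)
      (Real.exp (-k * t) * (-k * 1) * f t + Real.exp (-k * t) * f' t) t := fun t ht =>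
    (((hasDerivAt_id t).const_mul (-k)).exp).mul (hf t ht)
  have hanti : AntitoneOn (fun s => Real.exp (-k * s) * f s) (Set.Icc a b) := by
    apply antitoneOn_of_deriv_nonpos (convex_Icc a b)
    · exact fun t ht => (hd t ht).continuousAt.continuousWithinAt
    · exact fun t ht => (hd t (interior_subset ht)).differentiableAt.differentiableWithinAt
    · intro t ht
      rw [(hd t (interior_subset ht)).deriv]
      have := hf' t (interior_subset ht)
      nlinarith [Real.exp_pos (-k * t)]
  have h := hanti (Set.left_mem_Icc.mpr hab) (Set.right_mem_Icc.mpr hab) hab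
  simp only at h
  calc f b = Real.exp (k * b) * (Real.exp (-k * b) * f b) := by
        rw [← mul_assoc, ← Real.exp_add]; simp
    _ ≤ Real.exp (k * b) * (Real.exp (-k * a) * f a) := by gcongr
    _ = Real.exp (k * (b - a)) * f a := by
        rw [← mul_assoc, ← Real.exp_add]; ring_nf

/-- A function bounded on `[0, T]` by `D (e^{-εt} + e^{-ε(T-t)})` has integral at most `2D/ε`. -/
theorem setIntegral_Icc_le_of_le_exp_add_exp {f : ℝ → ℝ} {ε D T : ℝ} (hε : 0 < ε) (hD : 0 ≤ D)
    (hT : 0 ≤ T) (hf : ContinuousOn f (Set.Icc 0 T))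
    (hle : ∀ t ∈ Set.Icc 0 T, f t ≤ D * (Real.exp (-ε * t) + Real.exp (-ε * (T - t)))) :
    ∫ t in Set.Icc 0 T, f t ≤ D * (2 / ε) := by
  have hcont : Continuous fun t => D * (Real.exp (-ε * t) + Real.exp (-ε * (T - t))) := by
    fun_prop
  refine (MeasureTheory.setIntegral_mono_on (hf.integrableOn_Icc)
    (hcont.continuousOn.integrableOn_Icc) measurableSet_Icc hle).trans ?_
  rw [MeasureTheory.integral_Icc_eq_integral_Ioc, ← intervalIntegral.integral_of_le hT]
  have hd : ∀ t ∈ Set.uIcc 0 T, HasDerivAt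
      (fun s => D / ε * (Real.exp (-ε * (T - s)) - Real.exp (-ε * s)))
      (D * (Real.exp (-ε * t) + Real.exp (-ε * (T - t)))) t := by
    intro t _
    have h1 := ((hasDerivAt_id t).const_mul (-ε)).exp
    have h2 := (((hasDerivAt_id t).const_sub T).const_mul (-ε)).exp
    refine ((h2.sub h1).const_mul (D / ε)).congr_deriv ?_
    simp only [id]
    field_simp
    ring
  rw [intervalIntegral.integral_eq_sub_of_hasDerivAt hd (hcont.intervalIntegrable _ _)]
  have hpos : 0 ≤ D / ε * Real.exp (-ε * T) := by positivity
  simp only [sub_self, mul_zero, Real.exp_zero, sub_zero]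
  have : D * (2 / ε) = D / ε * 2 := by ring
  linarith

/-- If `P` is contracted and `Q` expanded, up to a small coupling, then `P + Q` decays exponentially
away from both ends of the time interval. -/
theorem add_le_exp_add_exp_of_hyperbolic {P Q P' Q' : ℝ → ℝ} {δ T : ℝ} (hδ : 0 ≤ δ)
    (hP : ∀ t ∈ Set.Icc 0 T, HasDerivAt P (P' t) t)
    (hQ : ∀ t ∈ Set.Icc 0 T, HasDerivAt Q (Q' t) t)
    (hP0 : ∀ t, 0 ≤ P t) (hQ0 : ∀ t, 0 ≤ Q t)
    (hP' : ∀ t ∈ Set.Icc 0 T, P' t ≤ -(3 / 2 * δ) * P t + δ / 3 * (P t + Q t))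
    (hQ' : ∀ t ∈ Set.Icc 0 T, 3 / 2 * δ * Q t - δ / 3 * (P t + Q t) ≤ Q' t) :
    ∀ t ∈ Set.Icc 0 T,
      P t + Q t ≤ 2 * (Real.exp (-δ * t) * P 0 + Real.exp (-δ * (T - t)) * Q T) := by
  intro t ht
  have h1 := le_exp_mul_of_hasDerivAt_le (k := -δ) (f := fun s => P s - 1 / 2 * Q s)
    (f' := fun s => P' s - 1 / 2 * Q' s) ht.1
    (fun s hs => (hP s ⟨hs.1, hs.2.trans ht.2⟩).sub
      ((hQ s ⟨hs.1, hs.2.trans ht.2⟩).const_mul (1 / 2)))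
    (fun s hs => by
      have := hP' s ⟨hs.1, hs.2.trans ht.2⟩
      have := hQ' s ⟨hs.1, hs.2.trans ht.2⟩
      have := mul_nonneg hδ (hQ0 s)
      linarith)
  have h2 := le_exp_mul_of_hasDerivAt_le (k := δ) (f := fun s => 1 / 2 * P s - Q s)
    (f' := fun s => 1 / 2 * P' s - Q' s) ht.2
    (fun s hs => ((hP s ⟨ht.1.trans hs.1, hs.2⟩).const_mul (1 / 2)).sub
      (hQ s ⟨ht.1.trans hs.1, hs.2⟩))
    (fun s hs => by
      have := hP' s ⟨ht.1.trans hs.1, hs.2⟩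
      have := hQ' s ⟨ht.1.trans hs.1, hs.2⟩
      have := mul_nonneg hδ (hP0 s)
      linarith)
  simp only [sub_zero] at h1 h2
  have h3 : Q t - 1 / 2 * P t ≤ Real.exp (-δ * (T - t)) * (Q T - 1 / 2 * P T) := by
    calc Q t - 1 / 2 * P t
        = -(Real.exp (-δ * (T - t)) * (Real.exp (δ * (T - t)) * (1 / 2 * P t - Q t))) := by
          rw [← mul_assoc, ← Real.exp_add]; simp
      _ ≤ -(Real.exp (-δ * (T - t)) * (1 / 2 * P T - Q T)) := by gcongr
      _ = _ := by ring
  have h4 := mul_nonneg (Real.exp_pos (-δ * t)).le (hQ0 0)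
  have h5 := mul_nonneg (Real.exp_pos (-δ * (T - t))).le (hP0 T)
  linarith

/-- The derivative of a symmetric quadratic form along a curve. -/
theorem HasDerivAt.symm_form_self {E : Type*} [NormedAddCommGroup E] [NormedSpace ℝ E]
    {β : E →L[ℝ] E →L[ℝ] ℝ} (hβ : ∀ x y, β x y = β y x) {x : ℝ → E} {x' : E} {t : ℝ}
    (hx : HasDerivAt x x' t) :
    HasDerivAt (fun s => β (x s) (x s)) (2 * β x' (x t)) t := by
  have h := (β.hasFDerivAt.comp_hasDerivAt t hx).clm_apply hx
  refine h.congr_deriv ?_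
  rw [Function.comp_apply, hβ (x t) x']
  ring

/-- A bound for a bilinear form evaluated at a small linear perturbation. -/
theorem abs_two_mul_form_apply_le {E F : Type*} [NormedAddCommGroup E] [NormedSpace ℝ E]
    [NormedAddCommGroup F] [NormedSpace ℝ F] (β : F →L[ℝ] F →L[ℝ] ℝ) (B : E →L[ℝ] F)
    {x : E} {y : F} {b η : ℝ} (hy : ‖y‖ ≤ ‖x‖) (hβ : ‖β‖ ≤ b) (hB : ‖B‖ ≤ η) :
    |2 * β (B x) y| ≤ 2 * b * η * ‖x‖ ^ 2 := by
  have hb : 0 ≤ b := β.opNorm_nonneg.trans hβ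
  have hη : 0 ≤ η := B.opNorm_nonneg.trans hB
  have h : |β (B x) y| ≤ b * (η * ‖x‖) * ‖x‖ :=
    (β.le_opNorm₂ _ _).trans (by gcongr; exact B.le_of_opNorm_le hB x)
  rw [abs_mul, abs_two]
  linarith


/-- Quantitative estimate near a hyperbolic fixed point: if all
complex eigenvalues of `Am` (the stable block) and `Ap` (the unstable block) have
real part `≥ δ > 0`, `Bm, Bp` are `C¹` near `0` with `Bm(0) = Bp(0) = 0`, and
`ε = δ/2`, then there are constants `C, K₀ > 0`, depending only on the data, such
that every solution `x = (xm, xp)` of `xm' = -Am·xm + Bm(x)x`, `xp' = Ap·xp + Bp(x)x`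
on `[0,T]` with `sup_{[0,T]} ‖x‖ ≤ M ≤ K₀` satisfies
`‖x(t)‖ ≤ C(e^{-εt} + e^{-ε(T-t)})M` for all `t ∈ [0,T]` and `∫₀ᵀ ‖x(t)‖ dt ≤ CM`. -/
theorem hyperbolic_block_estimate
    (km kp : ℕ) (hkm : 0 < km) (hkp : 0 < kp)
    (Am : Matrix (Fin km) (Fin km) ℝ) (Ap : Matrix (Fin kp) (Fin kp) ℝ)
    (δ : ℝ) (hδ : 0 < δ)
    (hAm : ∀ μ ∈ ((Am.map (Complex.ofReal : ℝ → ℂ)).charpoly).roots, δ ≤ μ.re)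
    (hAp : ∀ μ ∈ ((Ap.map (Complex.ofReal : ℝ → ℂ)).charpoly).roots, δ ≤ μ.re)
    (U : Set ((Fin km → ℝ) × (Fin kp → ℝ)))
    (hU : U ∈ nhds (0 : (Fin km → ℝ) × (Fin kp → ℝ)))
    (Bm : ((Fin km → ℝ) × (Fin kp → ℝ)) → ((Fin km → ℝ) × (Fin kp → ℝ)) →L[ℝ] (Fin km → ℝ))
    (Bp : ((Fin km → ℝ) × (Fin kp → ℝ)) → ((Fin km → ℝ) × (Fin kp → ℝ)) →L[ℝ] (Fin kp → ℝ))
    (hBm : ContDiffOn ℝ 1 Bm U) (hBp : ContDiffOn ℝ 1 Bp U)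
    (hBm0 : Bm 0 = 0) (hBp0 : Bp 0 = 0)
    (ε : ℝ) (hε : ε = δ / 2) :
    ∃ C > (0 : ℝ), ∃ K₀ > (0 : ℝ),
      ∀ T > (0 : ℝ), ∀ xm : ℝ → Fin km → ℝ, ∀ xp : ℝ → Fin kp → ℝ, ∀ M : ℝ,
        (∀ t ∈ Set.Icc (0 : ℝ) T, (xm t, xp t) ∈ U) →
        (∀ t ∈ Set.Icc (0 : ℝ) T,
          HasDerivAt xm (-(Am.mulVec (xm t)) + Bm (xm t, xp t) (xm t, xp t)) t) →
        (∀ t ∈ Set.Icc (0 : ℝ) T,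
          HasDerivAt xp (Ap.mulVec (xp t) + Bp (xm t, xp t) (xm t, xp t)) t) →
        (∀ t ∈ Set.Icc (0 : ℝ) T, ‖(xm t, xp t)‖ ≤ M) →
        M ≤ K₀ →
        (∀ t ∈ Set.Icc (0 : ℝ) T,
          ‖(xm t, xp t)‖ ≤ C * (Real.exp (-ε * t) + Real.exp (-ε * (T - t))) * M) ∧
        (∫ t in Set.Icc (0 : ℝ) T, ‖(xm t, xp t)‖) ≤ C * M := by
  obtain ⟨βm, hms, ⟨cm, hcm, hmpos⟩, hmA⟩ :=
    Am.exists_accretive_form (a := 3 / 4 * δ) (by linarith) hAm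
  obtain ⟨βp, hps, ⟨cp, hcp, hppos⟩, hpA⟩ :=
    Ap.exists_accretive_form (a := 3 / 4 * δ) (by linarith) hAp
  obtain ⟨b, hb⟩ : ∃ b, b = ‖βm‖ + ‖βp‖ + 1 := ⟨_, rfl⟩
  have hbm : ‖βm‖ ≤ b := by linarith [βp.opNorm_nonneg]
  have hbp : ‖βp‖ ≤ b := by linarith [βm.opNorm_nonneg]
  have hb0 : 0 < b := by linarith [βm.opNorm_nonneg, βp.opNorm_nonneg]
  obtain ⟨c, hc⟩ : ∃ c, c = min cm cp := ⟨_, rfl⟩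
  have hc0 : 0 < c := hc ▸ lt_min hcm hcp
  have hform : ∀ x : (Fin km → ℝ) × (Fin kp → ℝ),
      c * ‖x‖ ^ 2 ≤ βm x.1 x.1 + βp x.2 x.2 := by
    intro x
    have h1 : c * ‖x.1‖ ^ 2 ≤ βm x.1 x.1 :=
      (mul_le_mul_of_nonneg_right (hc ▸ min_le_left _ _) (by positivity)).trans (hmpos _)
    have h2 : c * ‖x.2‖ ^ 2 ≤ βp x.2 x.2 :=
      (mul_le_mul_of_nonneg_right (hc ▸ min_le_right _ _) (by positivity)).trans (hppos _)
    have h3 : 0 ≤ c * ‖x.1‖ ^ 2 := by positivity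
    have h4 : 0 ≤ c * ‖x.2‖ ^ 2 := by positivity
    rcases max_choice ‖x.1‖ ‖x.2‖ with h | h <;> rw [Prod.norm_def, h] <;> linarith
  obtain ⟨η, hη⟩ : ∃ η, η = δ * c / (6 * b) := ⟨_, rfl⟩
  have hη0 : 0 < η := by rw [hη]; positivity
  have hbη : 2 * b * η = δ / 3 * c := by rw [hη]; field_simp; norm_num
  obtain ⟨r, hr, hsmall⟩ : ∃ r > 0, ∀ x, ‖x‖ < r → ‖Bm x‖ ≤ η ∧ ‖Bp x‖ ≤ η := by
    have hm := ((hBm.continuousOn.continuousAt hU).norm).eventually_lt_const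
      (show ‖Bm 0‖ < η by simpa [hBm0])
    have hp := ((hBp.continuousOn.continuousAt hU).norm).eventually_lt_const
      (show ‖Bp 0‖ < η by simpa [hBp0])
    obtain ⟨r, hr, h⟩ := Metric.eventually_nhds_iff.mp (hm.and hp)
    refine ⟨r, hr, fun x hx => ?_⟩
    have := h (y := x) (by simpa using hx)
    exact ⟨this.1.le, this.2.le⟩
  obtain ⟨D, hD⟩ : ∃ D, D = √(2 * b / c) := ⟨_, rfl⟩
  have hD0 : 0 < D := by rw [hD]; positivity
  have hε0 : 0 < ε := by linarith
  refine ⟨D * (1 + 2 / ε), by positivity, r / 2, by positivity, ?_⟩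
  intro T hT xm xp M _ hxm hxp hM hMr
  have hM0 : 0 ≤ M := (norm_nonneg _).trans (hM 0 ⟨le_rfl, hT.le⟩)
  have hcpl : ∀ t ∈ Set.Icc 0 T,
      |2 * βm (Bm (xm t, xp t) (xm t, xp t)) (xm t)|
        ≤ δ / 3 * (βm (xm t) (xm t) + βp (xp t) (xp t)) ∧
      |2 * βp (Bp (xm t, xp t) (xm t, xp t)) (xp t)|
        ≤ δ / 3 * (βm (xm t) (xm t) + βp (xp t) (xp t)) := by
    intro t ht
    have hx := hsmall (xm t, xp t) (by linarith [hM t ht])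
    have hle : 2 * b * η * ‖(xm t, xp t)‖ ^ 2
        ≤ δ / 3 * (βm (xm t) (xm t) + βp (xp t) (xp t)) := by
      rw [hbη, mul_assoc]
      gcongr
      exact hform (xm t, xp t)
    exact ⟨(abs_two_mul_form_apply_le βm _ (norm_fst_le (xm t, xp t)) hbm hx.1).trans hle,
      (abs_two_mul_form_apply_le βp _ (norm_snd_le (xm t, xp t)) hbp hx.2).trans hle⟩
  have hdecay := add_le_exp_add_exp_of_hyperbolic hδ.le
    (fun t ht => (hxm t ht).symm_form_self hms) (fun t ht => (hxp t ht).symm_form_self hps)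
    (fun t => (by positivity : 0 ≤ cm * ‖xm t‖ ^ 2).trans (hmpos _))
    (fun t => (by positivity : 0 ≤ cp * ‖xp t‖ ^ 2).trans (hppos _))
    (fun t ht => by
      have h1 := (abs_le.mp (hcpl t ht).1).2
      have h2 := hmA (xm t)
      simp only [map_add, map_neg, _root_.add_apply, _root_.neg_apply]
      linarith)
    (fun t ht => by
      have h1 := (abs_le.mp (hcpl t ht).2).1
      have h2 := hpA (xp t)
      simp only [map_add, _root_.add_apply]
      linarith)
  have hbound : ∀ t ∈ Set.Icc 0 T,
      ‖(xm t, xp t)‖ ≤ D * M * (Real.exp (-ε * t) + Real.exp (-ε * (T - t))) := by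
    intro t ht
    have hm0 : βm (xm 0) (xm 0) ≤ b * M ^ 2 := by
      have h := (norm_fst_le (xm 0, xp 0)).trans (hM 0 ⟨le_rfl, hT.le⟩)
      calc βm (xm 0) (xm 0) ≤ ‖βm‖ * ‖xm 0‖ * ‖xm 0‖ :=
            (le_abs_self _).trans (βm.le_opNorm₂ _ _)
        _ ≤ b * M * M := by gcongr
        _ = b * M ^ 2 := by ring
    have hpT : βp (xp T) (xp T) ≤ b * M ^ 2 := by
      have h := (norm_snd_le (xm T, xp T)).trans (hM T ⟨hT.le, le_rfl⟩)
      calc βp (xp T) (xp T) ≤ ‖βp‖ * ‖xp T‖ * ‖xp T‖ :=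
            (le_abs_self _).trans (βp.le_opNorm₂ _ _)
        _ ≤ b * M * M := by gcongr
        _ = b * M ^ 2 := by ring
    have hexp : ∀ s, Real.exp (-δ * s) = Real.exp (-ε * s) ^ 2 := by
      intro s
      rw [← Real.exp_nat_mul, hε]
      congr 1
      push_cast
      ring
    have h := (hform (xm t, xp t)).trans (hdecay t ht)
    rw [hexp, hexp] at h
    have hpos1 := Real.exp_pos (-ε * t)
    have hpos2 := Real.exp_pos (-ε * (T - t))
    generalize Real.exp (-ε * t) = u at *
    generalize Real.exp (-ε * (T - t)) = w at *
    have hDsq : D ^ 2 = 2 * b / c := by rw [hD, Real.sq_sqrt (by positivity)]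
    refine abs_le_of_sq_le_sq' ?_ (by positivity) |>.2
    rw [← mul_le_mul_iff_right₀ hc0]
    calc c * ‖(xm t, xp t)‖ ^ 2
        ≤ 2 * (u ^ 2 * βm (xm 0) (xm 0) + w ^ 2 * βp (xp T) (xp T)) := h
      _ ≤ 2 * (u ^ 2 * (b * M ^ 2) + w ^ 2 * (b * M ^ 2)) := by gcongr
      _ = 2 * b * M ^ 2 * (u ^ 2 + w ^ 2) := by ring
      _ ≤ 2 * b * M ^ 2 * (u + w) ^ 2 := by
        gcongr
        nlinarith
      _ = c * (D * M * (u + w)) ^ 2 := by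
        rw [mul_pow, mul_pow, hDsq]
        field_simp
  refine ⟨fun t ht => (hbound t ht).trans ?_, ?_⟩
  · have h : D * 1 ≤ D * (1 + 2 / ε) := by
      gcongr
      linarith [show 0 < 2 / ε by positivity]
    calc _ = D * 1 * (Real.exp (-ε * t) + Real.exp (-ε * (T - t))) * M := by ring
      _ ≤ _ := by gcongr
  · have hcont : ContinuousOn (fun t => ‖(xm t, xp t)‖) (Set.Icc 0 T) := fun t ht =>
      ((hxm t ht).continuousAt.prodMk (hxp t ht).continuousAt).norm.continuousWithinAt
    refine (setIntegral_Icc_le_of_le_exp_add_exp hε0 (by positivity) hT.le hcont hbound).trans ?_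
    have : 0 ≤ D * M := by positivity
    linarith
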